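/- Let f be a real continuous 2π-periodic function and n ≥ 0. A trigonometric polynomial p ∈ 𝒫_n is the best supremum-norm approximant to f from 𝒫_n if and only if the error curve f − p equioscillates on [0,2π): there exist at least 2n+2 points 0 ≤ x_1 < x_2 < … < x_{2n+2} < 2π at which |f(x_i) − p(x_i)| = ‖f − p‖_∞ with alternating signs, i.e., (f − p)(x_{i+1}) = −(f − p)(x_i) for all i. -/

import Mathlib

open Real

/-- `p` is a real trigonometric polynomial of degree at most `n`, i.e. a function of
the form `Σ_{k=0}^n a_k cos(kt) + Σ_{k=1}^n b_k sin(kt)` with real coefficients. -/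
def IsRealTrigPoly (n : ℕ) (p : ℝ → ℝ) : Prop :=
  ∃ a b : ℕ → ℝ, ∀ t : ℝ,
    p t = (∑ k ∈ Finset.range (n + 1), a k * Real.cos (k * t)) +
      ∑ k ∈ Finset.Icc 1 n, b k * Real.sin (k * t)

/-- The supremum norm of `g` over `[0, 2π]`. -/
noncomputable def supNormOn (g : ℝ → ℝ) : ℝ :=
  ⨆ t : Set.Icc (0 : ℝ) (2 * π), |g t|

lemma tp_add {n : ℕ} {p q : ℝ → ℝ} (hp : IsRealTrigPoly n p) (hq : IsRealTrigPoly n q) :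
    IsRealTrigPoly n (fun t => p t + q t) := by
  obtain ⟨a, b, h⟩ := hp
  obtain ⟨a', b', h'⟩ := hq
  refine ⟨fun k => a k + a' k, fun k => b k + b' k, fun t => ?_⟩
  simp only [h, h', add_mul, Finset.sum_add_distrib]
  ring

lemma tp_smul {n : ℕ} {p : ℝ → ℝ} (c : ℝ) (hp : IsRealTrigPoly n p) :
    IsRealTrigPoly n (fun t => c * p t) := by
  obtain ⟨a, b, h⟩ := hp
  refine ⟨fun k => c * a k, fun k => c * b k, fun t => ?_⟩
  simp only [h, mul_assoc, ← Finset.mul_sum]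
  ring

lemma tp_zero (n : ℕ) : IsRealTrigPoly n (fun _ => 0) :=
  ⟨0, 0, fun t => by simp⟩

lemma tp_sum {n : ℕ} {ι : Type*} (s : Finset ι) (g : ι → ℝ → ℝ)
    (h : ∀ i ∈ s, IsRealTrigPoly n (g i)) : IsRealTrigPoly n (fun t => ∑ i ∈ s, g i t) := by
  classical
  induction s using Finset.induction_on with
  | empty => simpa using tp_zero n
  | insert a s ha ih =>
    simp only [Finset.sum_insert ha]
    exact tp_add (h a (by simp)) (ih fun i hi => h i (by simp [hi]))

lemma tp_cos {n k : ℕ} (hk : k ≤ n) : IsRealTrigPoly n (fun t => Real.cos (k * t)) := by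
  refine ⟨fun j => if j = k then 1 else 0, 0, fun t => ?_⟩
  simp [Nat.lt_succ_of_le hk]

lemma tp_sin {n k : ℕ} (hk : k ≤ n) : IsRealTrigPoly n (fun t => Real.sin (k * t)) := by
  rcases Nat.eq_zero_or_pos k with rfl | h0
  · simpa using tp_zero n
  refine ⟨0, fun j => if j = k then 1 else 0, fun t => ?_⟩
  have : k ∈ Finset.Icc 1 n := Finset.mem_Icc.2 ⟨h0, hk⟩
  simp
  intro h; omega

lemma tp_cos_shift {n k : ℕ} (hk : k ≤ n) (s : ℝ) :
    IsRealTrigPoly n (fun t => Real.cos (k * t + s)) := by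
  have := tp_add (tp_smul (Real.cos s) (tp_cos hk)) (tp_smul (-Real.sin s) (tp_sin hk))
  convert this using 2
  rw [Real.cos_add]; ring

lemma tp_mul {n : ℕ} {p : ℝ → ℝ} (hp : IsRealTrigPoly n p) (s : ℝ) :
    IsRealTrigPoly (n + 1) (fun t => Real.cos (t + s) * p t) := by
  obtain ⟨a, b, h⟩ := hp
  have key : ∀ k ≤ n, ∀ r : ℝ,
      IsRealTrigPoly (n + 1) (fun t => Real.cos (t + s) * Real.cos (k * t + r)) := by
    intro k hk r
    rcases Nat.eq_zero_or_pos k with rfl | h0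
    · have := tp_smul (Real.cos r) (tp_cos_shift (n := n + 1) (k := 1) (by omega) s)
      convert this using 2
      simp; ring
    · have h1 := tp_cos_shift (n := n + 1) (k := k + 1) (by omega) (s + r)
      have h2 := tp_cos_shift (n := n + 1) (k := k - 1) (by omega) (r - s)
      convert tp_smul (1 / 2) (tp_add h1 h2) using 2 with t
      rw [Nat.cast_sub h0]
      push_cast
      have e1 : ((k : ℝ) + 1) * t + (s + r) = (k * t + r) + (t + s) := by ring
      have e2 : ((k : ℝ) - 1) * t + (r - s) = (k * t + r) - (t + s) := by ring
      rw [e1, e2, Real.cos_add (k * t + r), Real.cos_sub (k * t + r)]; ring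
  have h1 := tp_sum (Finset.range (n + 1)) (fun k t => a k * (Real.cos (t + s) * Real.cos (k * t + 0)))
    (fun k hk => tp_smul _ (key k (by simp at hk; omega) 0))
  have h2 := tp_sum (Finset.Icc 1 n)
    (fun k t => b k * (Real.cos (t + s) * Real.cos (k * t + (-(π / 2)))))
    (fun k hk => tp_smul _ (key k (by simp at hk; omega) _))
  convert tp_add h1 h2 using 2 with t
  rw [h, mul_add, Finset.mul_sum, Finset.mul_sum]
  congr 1
  · exact Finset.sum_congr rfl fun k _ => by rw [add_zero]; ring
  · exact Finset.sum_congr rfl fun k _ => by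
      rw [← sub_eq_add_neg, Real.cos_sub_pi_div_two]; ring

lemma tp_mono {n : ℕ} {p : ℝ → ℝ} (hp : IsRealTrigPoly n p) : IsRealTrigPoly (n + 1) p := by
  obtain ⟨a, b, h⟩ := hp
  have h1 := tp_sum (Finset.range (n + 1)) (fun k t => a k * Real.cos (k * t))
    (fun k hk => tp_smul _ (tp_cos (n := n + 1) (by simp at hk; omega)))
  have h2 := tp_sum (Finset.Icc 1 n) (fun k t => b k * Real.sin (k * t))
    (fun k hk => tp_smul _ (tp_sin (n := n + 1) (by simp at hk; omega)))
  convert tp_add h1 h2 using 2 with t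
  exact h t

lemma tp_prod (n : ℕ) {ι : Type*} [DecidableEq ι] (S : Finset ι) (w : ι → ℝ)
    (hS : S.card = 2 * n) :
    IsRealTrigPoly n (fun t => ∏ j ∈ S, Real.sin ((t - w j) / 2)) := by
  induction n generalizing S with
  | zero =>
    have : S = ∅ := by simpa using hS
    subst this
    simpa using tp_cos (n := 0) (k := 0) le_rfl
  | succ n ih =>
    obtain ⟨a, S', ha, rfl, hS'⟩ := Finset.card_eq_succ.1 (show S.card = (2 * n + 1) + 1 by omega)
    obtain ⟨b, S'', hb, rfl, hS''⟩ := Finset.card_eq_succ.1 hS'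
    have h := ih S'' hS''
    have h1 := tp_smul (Real.cos ((w a - w b) / 2) / 2) (tp_mono h)
    have h2 := tp_smul (-1 / 2) (tp_mul h (-((w a + w b) / 2)))
    convert tp_add h1 h2 using 2 with t
    rw [Finset.prod_insert ha, Finset.prod_insert hb]
    have e1 : t + -((w a + w b) / 2) = (t - w a) / 2 + (t - w b) / 2 := by ring
    have e2 : (w a - w b) / 2 = (t - w b) / 2 - (t - w a) / 2 := by ring
    rw [e1, e2, Real.cos_add, Real.cos_sub]
    ring

lemma tp_continuous {n : ℕ} {p : ℝ → ℝ} (hp : IsRealTrigPoly n p) : Continuous p := by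
  obtain ⟨a, b, h⟩ := hp
  rw [funext h]
  fun_prop

lemma tp_periodic {n : ℕ} {p : ℝ → ℝ} (hp : IsRealTrigPoly n p) (t : ℝ) :
    p (t + 2 * π) = p t := by
  obtain ⟨a, b, h⟩ := hp
  rw [h, h]
  simp only [mul_add, Real.cos_add_nat_mul_two_pi, Real.sin_add_nat_mul_two_pi]

/-- sup norm facts -/
lemma sup_facts {g : ℝ → ℝ} (hg : Continuous g) :
    (∃ t ∈ Set.Icc (0 : ℝ) (2 * π), supNormOn g = |g t|) ∧
      ∀ t ∈ Set.Icc (0 : ℝ) (2 * π), |g t| ≤ supNormOn g := by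
  have hne : (Set.Icc (0 : ℝ) (2 * π)).Nonempty := ⟨0, by simp [Real.pi_pos.le]⟩
  obtain ⟨t, ht, hmax⟩ := isCompact_Icc.exists_isMaxOn hne (hg.abs.continuousOn)
  have : Nonempty (Set.Icc (0 : ℝ) (2 * π)) := hne.to_subtype
  have hb : BddAbove (Set.range fun s : Set.Icc (0 : ℝ) (2 * π) => |g s|) :=
    ⟨|g t|, by rintro _ ⟨s, rfl⟩; exact hmax s.2⟩
  have hle : ∀ t ∈ Set.Icc (0 : ℝ) (2 * π), |g t| ≤ supNormOn g :=
    fun s hs => le_ciSup hb ⟨s, hs⟩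
  exact ⟨⟨t, ht, le_antisymm (ciSup_le fun s => hmax s.2) (hle t ht)⟩, hle⟩

lemma sin_half_mul_pos {u v z : ℝ} (hu : u ∈ Set.Ico (0 : ℝ) (2 * π)) (hv : v ∈ Set.Ico (0 : ℝ) (2 * π))
    (hz : z ∈ Set.Ico (0 : ℝ) (2 * π)) (h : (z < u ∧ z < v) ∨ (u < z ∧ v < z)) :
    0 < Real.sin ((u - z) / 2) * Real.sin ((v - z) / 2) := by
  obtain ⟨hu1, hu2⟩ := hu
  obtain ⟨hv1, hv2⟩ := hv
  obtain ⟨hz1, hz2⟩ := hz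
  rcases h with ⟨h1, h2⟩ | ⟨h1, h2⟩
  · exact mul_pos (Real.sin_pos_of_pos_of_lt_pi (by linarith) (by linarith))
      (Real.sin_pos_of_pos_of_lt_pi (by linarith) (by linarith))
  · exact mul_pos_of_neg_of_neg (Real.sin_neg_of_neg_of_neg_pi_lt (by linarith) (by linarith))
      (Real.sin_neg_of_neg_of_neg_pi_lt (by linarith) (by linarith))

lemma key_alt {n : ℕ} {x : Fin (2 * n + 2) → ℝ} (hx : StrictMono x)
    (hI : ∀ i, x i ∈ Set.Ico (0 : ℝ) (2 * π)) {c : Fin (2 * n + 2) → ℝ}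
    (hc : ∀ q, IsRealTrigPoly n q → ∑ i, c i * q (x i) = 0) (i : Fin (2 * n + 1)) :
    ∃ κ : ℝ, 0 < κ ∧ c i.succ = -κ * c i.castSucc := by
  set S : Finset (Fin (2 * n + 2)) := {i.castSucc, i.succ}ᶜ with hS
  have hne : i.castSucc ≠ i.succ := (Fin.castSucc_lt_succ).ne
  have hcard : S.card = 2 * n := by
    rw [hS, Finset.card_compl, Finset.card_pair hne]; simp
  set q : ℝ → ℝ := fun t => ∏ j ∈ S, Real.sin ((t - x j) / 2) with hq
  have hqz : ∀ j ∈ S, q (x j) = 0 := fun j hj => Finset.prod_eq_zero hj (by simp)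
  have hsum := hc q (tp_prod n S x hcard)
  have hsplit : ∑ j, c j * q (x j) = ∑ j ∈ {i.castSucc, i.succ}, c j * q (x j) := by
    symm
    apply Finset.sum_subset (Finset.subset_univ _)
    intro j _ hj
    rw [hqz j (by rw [hS, Finset.mem_compl]; exact hj), mul_zero]
  rw [hsplit, Finset.sum_pair hne] at hsum
  have hpos : 0 < q (x i.castSucc) * q (x i.succ) := by
    rw [hq]
    simp only [← Finset.prod_mul_distrib]
    refine Finset.prod_pos fun j hj => sin_half_mul_pos (hI _) (hI _) (hI _) ?_
    simp only [hS, Finset.mem_compl, Finset.mem_insert, Finset.mem_singleton, not_or] at hj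
    obtain ⟨h1, h2⟩ := hj
    rcases lt_or_gt_of_ne h1 with h | h
    · exact Or.inl ⟨hx h, hx (h.trans Fin.castSucc_lt_succ)⟩
    · have h3 : i.succ < j := by
        rw [Fin.lt_def] at h
        rw [Fin.ext_iff] at h2
        rw [Fin.lt_def]
        simp at *
        omega
      exact Or.inr ⟨hx h, hx h3⟩
  have h2 : q (x i.succ) ≠ 0 := fun h => by simp [h] at hpos
  refine ⟨q (x i.castSucc) / q (x i.succ), ?_, ?_⟩
  · have : q (x i.castSucc) / q (x i.succ) = q (x i.castSucc) * q (x i.succ) / q (x i.succ) ^ 2 := by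
      field_simp
    rw [this]; positivity
  · field_simp
    linarith

/-- evaluation vector -/
noncomputable def evalVec (n : ℕ) (t : ℝ) : Fin (n + 1) ⊕ Fin n → ℝ :=
  Sum.elim (fun k => Real.cos ((k : ℕ) * t)) (fun k => Real.sin (((k : ℕ) + 1 : ℕ) * t))

lemma tp_of_vec (n : ℕ) (v : Fin (n + 1) ⊕ Fin n → ℝ) :
    IsRealTrigPoly n (fun t => ∑ i, v i * evalVec n t i) := by
  refine tp_sum _ _ fun i _ => tp_smul _ ?_
  rcases i with k | k
  · exact tp_cos (by omega)
  · exact tp_sin (by omega)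

lemma vec_of_tp {n : ℕ} {q : ℝ → ℝ} (hq : IsRealTrigPoly n q) :
    ∃ v : Fin (n + 1) ⊕ Fin n → ℝ, ∀ t, q t = ∑ i, v i * evalVec n t i := by
  obtain ⟨a, b, h⟩ := hq
  refine ⟨Sum.elim (fun k => a k) (fun k => b (k + 1)), fun t => ?_⟩
  rw [h, Fintype.sum_sum_type, Finset.sum_range]
  congr 1
  rw [← Finset.Ico_add_one_right_eq_Icc, Finset.sum_Ico_eq_sum_range, Finset.sum_range]
  simp only [evalVec, Sum.elim_inr]
  refine Finset.sum_congr rfl fun k _ => ?_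
  rw [add_comm 1 (k : ℕ)]

/-- relations on evaluation vectors give relations for all trigonometric polynomials -/
lemma rel_tp {n : ℕ} {ι : Type*} [Fintype ι] {x c : ι → ℝ}
    (h : ∑ i, c i • evalVec n (x i) = 0) (q : ℝ → ℝ) (hq : IsRealTrigPoly n q) :
    ∑ i, c i * q (x i) = 0 := by
  obtain ⟨v, hv⟩ := vec_of_tp hq
  have : ∀ j, ∑ i, c i * evalVec n (x i) j = 0 := fun j => by
    have := congrFun h j
    simpa using this
  simp only [hv, Finset.mul_sum]
  rw [Finset.sum_comm]
  refine Finset.sum_eq_zero fun j _ => ?_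
  have h2 := this j
  calc _ = v j * ∑ i, c i * evalVec n (x i) j := by
        rw [Finset.mul_sum]; exact Finset.sum_congr rfl fun i _ => by ring
    _ = 0 := by rw [h2, mul_zero]

lemma all_sign {m : ℕ} {s : Fin (m + 1) → ℝ}
    (h : ∀ i : Fin m, ∃ κ : ℝ, 0 < κ ∧ s i.succ = κ * s i.castSucc) (i : Fin (m + 1)) :
    ∃ κ : ℝ, 0 < κ ∧ s i = κ * s 0 := by
  induction i using Fin.induction with
  | zero => exact ⟨1, one_pos, by simp⟩
  | succ i ih =>
    obtain ⟨k, hk, e⟩ := ih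
    obtain ⟨k', hk', e'⟩ := h i
    exact ⟨k' * k, mul_pos hk' hk, by rw [e', e, mul_assoc]⟩

lemma hull_compact {E : Type*} [NormedAddCommGroup E] [NormedSpace ℝ E] [FiniteDimensional ℝ E]
    {s : Set E} (hs : IsCompact s) : IsCompact (convexHull ℝ s) := by
  classical
  rcases s.eq_empty_or_nonempty with rfl | ⟨s0, hs0⟩
  · simp
  set d := Module.finrank ℝ E + 1 with hd
  let F : (Fin d → ℝ) × (Fin d → E) → E := fun wz => ∑ i, wz.1 i • wz.2 i
  have hF : Continuous F := by fun_prop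
  have hK : IsCompact ((stdSimplex ℝ (Fin d)) ×ˢ (Set.univ.pi fun _ : Fin d => s)) :=
    (isCompact_stdSimplex ℝ (Fin d)).prod (isCompact_univ_pi fun _ => hs)
  have heq : convexHull ℝ s = F '' ((stdSimplex ℝ (Fin d)) ×ˢ (Set.univ.pi fun _ : Fin d => s)) := by
    apply Set.Subset.antisymm
    · intro y hy
      obtain ⟨ι, _, z, w, hz, haff, hw, hw1, hsum⟩ := eq_pos_convex_span_of_mem_convexHull hy
      have hcard : Fintype.card ι ≤ Fintype.card (Fin d) := by
        rw [Fintype.card_fin]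
        refine haff.card_le_finrank_succ.trans ?_
        exact Nat.succ_le_succ (Submodule.finrank_le _)
      obtain ⟨j⟩ := Function.Embedding.nonempty_of_card_le hcard
      refine ⟨(Function.extend j w 0, Function.extend j z fun _ => s0), ⟨⟨?_, ?_⟩, ?_⟩, ?_⟩
      · intro k
        by_cases hk : ∃ i, j i = k
        · obtain ⟨i, rfl⟩ := hk
          simp only [j.injective.extend_apply]
          exact (hw i).le
        · simp [Function.extend_apply' _ _ _ hk]
      · rw [← hw1]
        refine (Fintype.sum_of_injective j j.injective _ _ ?_ ?_).symm
        · intro k hk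
          exact Function.extend_apply' _ _ _ hk
        · intro i; exact (j.injective.extend_apply _ _ _).symm
      · intro k _
        by_cases hk : ∃ i, j i = k
        · obtain ⟨i, rfl⟩ := hk
          simp only [j.injective.extend_apply]
          exact hz ⟨i, rfl⟩
        · simpa only [Function.extend_apply' _ _ _ hk] using hs0
      · rw [← hsum]
        refine (Fintype.sum_of_injective j j.injective _ _ ?_ ?_).symm
        · intro k hk
          dsimp only
          rw [Function.extend_apply' _ _ _ hk]; simp
        · intro i
          simp only [j.injective.extend_apply]
    · rintro _ ⟨⟨w, z⟩, ⟨⟨hw0, hw1⟩, hz⟩, rfl⟩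
      exact (convex_convexHull ℝ s).sum_mem (fun i _ => hw0 i) hw1
        (fun i _ => subset_convexHull ℝ s (hz i (Set.mem_univ i)))
  rw [heq]
  exact hK.image hF

lemma improve {e r : ℝ → ℝ} (he : Continuous e) (hr : Continuous r) {u : ℝ} (hu : 0 < u)
    (h : ∀ t ∈ Set.Icc (0 : ℝ) (2 * π), |e t| = supNormOn e → u < e t * r t) :
    ∃ ε : ℝ, supNormOn (fun t => e t - ε * r t) < supNormOn e := by
  obtain ⟨⟨t₁, ht₁, hE⟩, hle⟩ := sup_facts he
  obtain ⟨⟨t₂, ht₂, hM⟩, hrle⟩ := sup_facts hr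
  set E := supNormOn e with hEdef
  set M := supNormOn r + 1 with hMdef
  have hE0 : 0 ≤ E := hE ▸ abs_nonneg _
  have hM0 : 0 < M := by rw [hMdef, hM]; positivity
  obtain ⟨E', hE', hK⟩ : ∃ E' < E, ∀ t ∈ Set.Icc (0 : ℝ) (2 * π), e t * r t ≤ u → |e t| ≤ E' := by
    have hKc : IsCompact (Set.Icc (0 : ℝ) (2 * π) ∩ {t | e t * r t ≤ u}) :=
      isCompact_Icc.inter_right (isClosed_le (he.mul hr) continuous_const)
    rcases (Set.Icc (0 : ℝ) (2 * π) ∩ {t | e t * r t ≤ u}).eq_empty_or_nonempty with h0 | h0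
    · refine ⟨E - 1, by linarith, fun t ht h1 => ?_⟩
      have : t ∈ (∅ : Set ℝ) := h0 ▸ ⟨ht, h1⟩
      exact this.elim
    · obtain ⟨s, hs, hmax⟩ := hKc.exists_isMaxOn h0 he.abs.continuousOn
      refine ⟨|e s|, lt_of_le_of_ne (hle s hs.1) fun hh => ?_, fun t ht h1 => hmax ⟨ht, h1⟩⟩
      exact absurd (h s hs.1 hh) (not_lt.2 hs.2)
  obtain ⟨ε, hε, h1, h2⟩ : ∃ ε : ℝ, 0 < ε ∧ ε * M < E - E' ∧ ε * M ^ 2 < u := by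
    have a1 : 0 < (E - E') / M := div_pos (by linarith) hM0
    have a2 : 0 < u / M ^ 2 := by positivity
    obtain ⟨ε, h0, h1⟩ := exists_between (lt_min a1 a2)
    exact ⟨ε, h0, (lt_div_iff₀ hM0).1 (h1.trans_le (min_le_left _ _)),
      (lt_div_iff₀ (by positivity)).1 (h1.trans_le (min_le_right _ _))⟩
  refine ⟨ε, ?_⟩
  obtain ⟨⟨t, ht, hs⟩, -⟩ := sup_facts (g := fun t => e t - ε * r t) (by fun_prop)
  rw [hs]
  have hrt : |r t| ≤ M := (hrle t ht).trans (by linarith)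
  by_cases hc : e t * r t ≤ u
  · have := hK t ht hc
    calc |e t - ε * r t| ≤ |e t| + |ε * r t| := abs_sub _ _
      _ = |e t| + ε * |r t| := by rw [abs_mul, abs_of_pos hε]
      _ ≤ E' + ε * M := by gcongr
      _ < E := by linarith
  · push Not at hc
    apply abs_lt_of_sq_lt_sq _ hE0
    have h3 : e t ^ 2 ≤ E ^ 2 := sq_le_sq' (by linarith [neg_le_of_abs_le (hle t ht)])
      (le_of_abs_le (hle t ht))
    have h4 : r t ^ 2 ≤ M ^ 2 := sq_le_sq' (by linarith [neg_le_of_abs_le hrt]) (le_of_abs_le hrt)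
    have h5 : ε * r t ^ 2 ≤ ε * M ^ 2 := by gcongr
    have h6 : 0 < ε * (2 * (e t * r t) - ε * r t ^ 2) := mul_pos hε (by linarith)
    nlinarith

lemma evalVec_continuous (n : ℕ) : Continuous (evalVec n) := by
  refine continuous_pi fun i => ?_
  rcases i with k | k <;> simp only [evalVec, Sum.elim_inl, Sum.elim_inr] <;> fun_prop

lemma evalVec_two_pi (n : ℕ) : evalVec n (2 * π) = evalVec n 0 := by
  ext i
  rcases i with k | k <;> simp only [evalVec, Sum.elim_inl, Sum.elim_inr, mul_zero]
  · simp
  · have := Real.sin_add_nat_mul_two_pi 0 ((k : ℕ) + 1)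
    simpa using this

lemma sufficiency {f p : ℝ → ℝ} (hcont : Continuous f) {n : ℕ} (hp : IsRealTrigPoly n p)
    {x : Fin (2 * n + 2) → ℝ} (hx : StrictMono x) (hI : ∀ i, x i ∈ Set.Ico (0 : ℝ) (2 * π))
    (hE : ∀ i, |f (x i) - p (x i)| = supNormOn (fun t => f t - p t))
    (halt : ∀ i : Fin (2 * n + 1),
          f (x i.succ) - p (x i.succ) = -(f (x i.castSucc) - p (x i.castSucc)))
    {q : ℝ → ℝ} (hq : IsRealTrigPoly n q) :
    supNormOn (fun t => f t - p t) ≤ supNormOn (fun t => f t - q t) := by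
  obtain ⟨c, hrel, i₀, hi₀⟩ : ∃ c : Fin (2 * n + 2) → ℝ, ∑ i, c i • evalVec n (x i) = 0 ∧
      ∃ i, c i ≠ 0 := by
    apply Fintype.not_linearIndependent_iff.1
    intro hli
    have := hli.fintype_card_le_finrank
    simp at this
    omega
  have hc := rel_tp hrel
  have hkey := key_alt hx hI hc
  set E := supNormOn (fun t => f t - p t) with hEdef
  set s : Fin (2 * n + 1 + 1) → ℝ := fun i => c i * (f (x i) - p (x i)) with hs
  have hsign := all_sign (s := s) (fun i => by
    obtain ⟨κ, hκ, h⟩ := hkey i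
    exact ⟨κ, hκ, by simp only [hs]; rw [h, halt]; ring⟩)
  have habs : |∑ i, s i| = ∑ i, |s i| := by
    rcases le_total 0 (s 0) with h0 | h0
    · have : ∀ i, 0 ≤ s i := fun i => by
        obtain ⟨κ, hκ, h⟩ := hsign i
        rw [h]; positivity
      rw [abs_of_nonneg (Finset.sum_nonneg fun i _ => this i)]
      exact Finset.sum_congr rfl fun i _ => (abs_of_nonneg (this i)).symm
    · have : ∀ i, s i ≤ 0 := fun i => by
        obtain ⟨κ, hκ, h⟩ := hsign i
        rw [h]; exact mul_nonpos_of_nonneg_of_nonpos hκ.le h0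
      rw [abs_of_nonpos (Finset.sum_nonpos fun i _ => this i), ← Finset.sum_neg_distrib]
      exact Finset.sum_congr rfl fun i _ => (abs_of_nonpos (this i)).symm
  have h1 : ∑ i, |s i| = (∑ i, |c i|) * E := by
    rw [Finset.sum_mul]
    exact Finset.sum_congr rfl fun i _ => by simp only [hs]; rw [abs_mul, hE]
  have h2 : ∑ i, s i = ∑ i, c i * (f (x i) - q (x i)) := by
    simp only [hs, mul_sub, Finset.sum_sub_distrib]
    rw [hc p hp, hc q hq]
  have hqle := (sup_facts (g := fun t => f t - q t) (hcont.sub (tp_continuous hq))).2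
  have h3 : |∑ i, s i| ≤ (∑ i, |c i|) * supNormOn (fun t => f t - q t) := by
    rw [h2, Finset.sum_mul]
    refine (Finset.abs_sum_le_sum_abs _ _).trans (Finset.sum_le_sum fun i _ => ?_)
    rw [abs_mul]
    exact mul_le_mul_of_nonneg_left (hqle _ ⟨(hI i).1, (hI i).2.le⟩) (abs_nonneg _)
  rw [habs, h1] at h3
  have hpos : 0 < ∑ i, |c i| :=
    Finset.sum_pos' (fun i _ => abs_nonneg _) ⟨i₀, Finset.mem_univ _, abs_pos.2 hi₀⟩
  exact le_of_mul_le_mul_left h3 hpos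

lemma infinite_Ico_two_pi : Infinite (Set.Ico (0 : ℝ) (2 * π)) :=
  (Set.Ico_infinite (by positivity)).to_subtype

lemma necessity {f p : ℝ → ℝ} (hcont : Continuous f) (hper : ∀ t : ℝ, f (t + 2 * π) = f t)
    {n : ℕ} (hp : IsRealTrigPoly n p)
    (hbest : ∀ q : ℝ → ℝ, IsRealTrigPoly n q →
        supNormOn (fun t => f t - p t) ≤ supNormOn (fun t => f t - q t)) :
    ∃ x : Fin (2 * n + 2) → ℝ, StrictMono x ∧
        (∀ i, x i ∈ Set.Ico (0 : ℝ) (2 * π)) ∧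
        (∀ i, |f (x i) - p (x i)| = supNormOn (fun t => f t - p t)) ∧
        ∀ i : Fin (2 * n + 1),
          f (x i.succ) - p (x i.succ) = -(f (x i.castSucc) - p (x i.castSucc)) := by
  classical
  have := infinite_Ico_two_pi
  set e : ℝ → ℝ := fun t => f t - p t with he
  have hec : Continuous e := hcont.sub (tp_continuous hp)
  have heper : e (2 * π) = e 0 := by
    have h1 := hper 0
    have h2 := tp_periodic hp 0
    simp only [zero_add] at h1 h2
    simp only [he, h1, h2]
  obtain ⟨⟨t₁, ht₁, hE⟩, hle⟩ := sup_facts hec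
  set E := supNormOn e with hEdef
  have hE0 : 0 ≤ E := hE ▸ abs_nonneg _
  change ∃ x : Fin (2 * n + 2) → ℝ, StrictMono x ∧ (∀ i, x i ∈ Set.Ico (0 : ℝ) (2 * π)) ∧
    (∀ i, |e (x i)| = E) ∧ ∀ i : Fin (2 * n + 1), e (x i.succ) = -e (x i.castSucc)
  rcases hE0.eq_or_lt with hz | hEpos
  · obtain ⟨S, hS⟩ := Infinite.exists_subset_card_eq (Set.Ico (0 : ℝ) (2 * π)) (2 * n + 2)
    have hzero : ∀ t ∈ Set.Ico (0 : ℝ) (2 * π), e t = 0 := fun t ht => by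
      have := hle t ⟨ht.1, ht.2.le⟩
      rw [← hz] at this
      exact abs_nonpos_iff.1 this
    refine ⟨fun i => S.orderEmbOfFin hS i, fun i j hij => ?_, fun i => (S.orderEmbOfFin hS i).2,
      fun i => ?_, fun i => ?_⟩
    · exact (S.orderEmbOfFin hS).strictMono hij
    · rw [hzero _ (S.orderEmbOfFin hS i).2, abs_zero, hz]
    · rw [hzero _ (S.orderEmbOfFin hS _).2, hzero _ (S.orderEmbOfFin hS _).2, neg_zero]
  -- the main case
  set X : Set ℝ := Set.Icc (0 : ℝ) (2 * π) ∩ {t | |e t| = E} with hX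
  have hXc : IsCompact X := isCompact_Icc.inter_right (isClosed_eq hec.abs continuous_const)
  have hYc : IsCompact ((fun t => e t • evalVec n t) '' X) :=
    hXc.image (hec.smul (evalVec_continuous n))
  have h0 : (0 : Fin (n + 1) ⊕ Fin n → ℝ) ∈ convexHull ℝ ((fun t => e t • evalVec n t) '' X) := by
    by_contra hcon
    obtain ⟨L, u, hu, hL⟩ := geometric_hahn_banach_point_closed (convex_convexHull ℝ _)
      (hull_compact hYc).isClosed hcon
    rw [map_zero] at hu
    have hr : IsRealTrigPoly n (fun t => L (evalVec n t)) := by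
      convert tp_of_vec n (fun i => L (Pi.single i 1)) using 2 with t
      have := LinearMap.pi_apply_eq_sum_univ L.toLinearMap (evalVec n t)
      simp only [ContinuousLinearMap.coe_coe, smul_eq_mul] at this
      rw [this]
      refine Finset.sum_congr rfl fun i _ => ?_
      rw [mul_comm]
      congr 2
      ext j
      simp [Pi.single_apply, eq_comm]
    obtain ⟨ε, hε⟩ := improve hec (tp_continuous hr) hu (fun t ht h1 => by
      have := hL _ (subset_convexHull ℝ _ ⟨t, ⟨ht, h1⟩, rfl⟩)
      simpa using this)
    have := hbest _ (tp_add hp (tp_smul ε hr))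
    refine absurd this (not_le.2 ?_)
    have hfun : (fun t => f t - (p t + ε * L (evalVec n t))) =
        fun t => e t - ε * L (evalVec n t) := by
      funext t
      change f t - (p t + ε * L (evalVec n t)) = (f t - p t) - ε * L (evalVec n t)
      ring
    rw [hfun]
    exact hε
  obtain ⟨ι, _, z, w, hzr, haff, hw, hw1, hsum⟩ := eq_pos_convex_span_of_mem_convexHull h0
  have hcard : Fintype.card ι ≤ 2 * n + 2 := by
    refine haff.card_le_finrank_succ.trans ?_
    have h1 := Submodule.finrank_le (vectorSpan ℝ (Set.range z))
    have h2 : Module.finrank ℝ (Fin (n + 1) ⊕ Fin n → ℝ) = 2 * n + 1 := by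
      rw [Module.finrank_pi]; simp; omega
    omega
  have hpts : ∀ i, ∃ t : Set.Ico (0 : ℝ) (2 * π), |e t| = E ∧ e t • evalVec n t = z i := by
    intro i
    obtain ⟨t, ⟨ht, htE⟩, hzt⟩ := hzr ⟨i, rfl⟩
    rcases ht.2.eq_or_lt with h2 | h2
    · refine ⟨⟨0, by simp [Real.pi_pos]⟩, ?_, ?_⟩
      · rw [← heper, ← h2]; exact htE
      · dsimp only
        rw [← heper, ← evalVec_two_pi, ← h2]; exact hzt
    · exact ⟨⟨t, ht.1, h2⟩, htE, hzt⟩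
  choose τ hτE hτz using hpts
  have hτinj : Function.Injective τ := fun i i' h => haff.injective (by rw [← hτz, ← hτz, h])
  obtain ⟨S, hsub, hS⟩ := Infinite.exists_superset_card_eq (Finset.univ.image τ) (2 * n + 2)
    (Finset.card_image_le.trans (by simpa using hcard))
  have hj : ∀ i, ∃ j, S.orderEmbOfFin hS j = τ i := fun i => by
    have : τ i ∈ (S : Set _) := hsub (Finset.mem_image_of_mem _ (Finset.mem_univ i))
    rw [← Finset.range_orderEmbOfFin S hS] at this
    exact this
  choose j hj using hj
  have hjinj : Function.Injective j := fun i i' h => hτinj (by rw [← hj, ← hj, h])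
  set x : Fin (2 * n + 2) → ℝ := fun k => S.orderEmbOfFin hS k with hxdef
  have hxj : ∀ i, x (j i) = τ i := fun i => by simp only [hxdef, hj]
  have hxm : StrictMono x := fun a b hab => (S.orderEmbOfFin hS).strictMono hab
  have hxI : ∀ k, x k ∈ Set.Ico (0 : ℝ) (2 * π) := fun k => (S.orderEmbOfFin hS k).2
  set W : Fin (2 * n + 2) → ℝ := Function.extend j w 0 with hW
  have hrel : ∑ k, (W k * e (x k)) • evalVec n (x k) = 0 := by
    rw [← hsum]
    refine (Fintype.sum_of_injective j hjinj _ _ ?_ ?_).symm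
    · intro k hk
      rw [hW, Function.extend_apply' _ _ _ hk]; simp
    · intro i
      rw [hW, hjinj.extend_apply, hxj, mul_smul, hτz]
  have hkey := key_alt hxm hxI (rel_tp hrel)
  obtain ⟨i₀⟩ : Nonempty ι := by
    by_contra hne
    rw [not_nonempty_iff] at hne
    simp at hw1
  have hmain : ∀ k, W k * e (x k) ≠ 0 := by
    have hsg := all_sign (m := 2 * n + 1) (s := fun k => |W k * e (x k)|) (fun i => by
      obtain ⟨κ, hκ, h⟩ := hkey i
      exact ⟨κ, hκ, by rw [h, abs_mul, abs_neg, abs_of_pos hκ]⟩)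
    have hnz : W (j i₀) * e (x (j i₀)) ≠ 0 := by
      rw [hW, hjinj.extend_apply, hxj]
      refine mul_ne_zero (hw i₀).ne' (abs_pos.1 ?_)
      rw [hτE]; exact hEpos
    intro k hk
    obtain ⟨κ, hκ, h⟩ := hsg k
    obtain ⟨κ', hκ', h'⟩ := hsg (j i₀)
    rw [hk, abs_zero] at h
    have : |W 0 * e (x 0)| = 0 := by
      rcases mul_eq_zero.1 h.symm with h | h
      · exact absurd h hκ.ne'
      · exact h
    rw [this, mul_zero] at h'
    exact hnz (abs_eq_zero.1 h')
  have hsurj : ∀ k, ∃ i, j i = k := fun k => by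
    by_contra hk
    apply hmain k
    rw [hW, Function.extend_apply' _ _ _ hk]; simp
  have hWpos : ∀ k, 0 < W k := fun k => by
    obtain ⟨i, rfl⟩ := hsurj k
    rw [hW, hjinj.extend_apply]; exact hw i
  have hxE : ∀ k, |e (x k)| = E := fun k => by
    obtain ⟨i, rfl⟩ := hsurj k
    rw [hxj]; exact hτE i
  refine ⟨x, hxm, hxI, hxE, fun i => ?_⟩
  obtain ⟨κ, hκ, h⟩ := hkey i
  rcases abs_eq_abs.1 ((hxE i.succ).trans (hxE i.castSucc).symm) with h1 | h1
  · exfalso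
    have hne : e (x i.castSucc) ≠ 0 := abs_pos.1 (by rw [hxE]; exact hEpos)
    rw [h1] at h
    have h2 : W i.succ + κ * W i.castSucc = 0 := by
      apply mul_right_cancel₀ hne
      linarith
    have := hWpos i.succ
    have := mul_pos hκ (hWpos i.castSucc)
    linarith
  · exact h1

/-- Equioscillation characterization of the best supremum-norm approximant to a real
continuous `2π`-periodic function `f` from the real trigonometric polynomials of
degree at most `n`: `p` is a best approximant if and only if the error `f - p`
attains `±‖f - p‖_∞` with alternating signs at (at least) `2n+2` increasing points
of `[0, 2π)`. -/
theorem best_trig_approx_iff_equioscillation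
    (f : ℝ → ℝ) (hcont : Continuous f)
    (hper : ∀ t : ℝ, f (t + 2 * π) = f t) (n : ℕ)
    (p : ℝ → ℝ) (hp : IsRealTrigPoly n p) :
    (∀ q : ℝ → ℝ, IsRealTrigPoly n q →
        supNormOn (fun t => f t - p t) ≤ supNormOn (fun t => f t - q t)) ↔
      ∃ x : Fin (2 * n + 2) → ℝ, StrictMono x ∧
        (∀ i, x i ∈ Set.Ico (0 : ℝ) (2 * π)) ∧
        (∀ i, |f (x i) - p (x i)| = supNormOn (fun t => f t - p t)) ∧
        ∀ i : Fin (2 * n + 1),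
          f (x i.succ) - p (x i.succ) = -(f (x i.castSucc) - p (x i.castSucc)) := by
  constructor
  · exact necessity hcont hper hp
  · rintro ⟨x, hx, hI, hE, halt⟩ q hq
    exact sufficiency hcont hp hx hI hE halt hq
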